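/- arXiv:1503.07211 — 2 statements merged into one kernel-verified Lean document; each statement's English description precedes it below -/
import Mathlib

section
/- Let k ≥ 1 and let y', y'' ∈ {0,1}^k differ in exactly one entry, and let q', q'' be any two probability distributions on {0,1}. Then the kernel p ∈ Δ_{k,1} defined by p(·|y') = q', p(·|y'') = q'', and p(·|y) = δ_0 (the point measure at 0) for all other y ∈ {0,1}^k, lies in the closure of F_{k,1}. -/
open Finset

/-- The logistic sigmoid function `σ(a) = 1/(1+exp(-a))`. -/
noncomputable def sigmoid (a : ℝ) : ℝ := 1 / (1 + Real.exp (-a))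

/-- Real value of a bit. -/
def bval (b : Bool) : ℝ := if b then 1 else 0

/-- The set `F_{k,m}` of Markov kernels representable by a feedforward layer of `m`
sigmoid stochastic units with `k` binary inputs. -/
noncomputable def Fset (k m : ℕ) : Set ((Fin k → Bool) → (Fin m → Bool) → ℝ) :=
  {P | ∃ (V : Fin m → Fin k → ℝ) (c : Fin m → ℝ), ∀ y z,
    P y z = ∏ j, (if z j then sigmoid ((∑ i, V j i * bval (y i)) + c j)
                  else 1 - sigmoid ((∑ i, V j i * bval (y i)) + c j))}

/-- `Δ_{k,n}`: all Markov kernels from `{0,1}^k` to distributions on `{0,1}^n`. -/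
def markovKernels (k n : ℕ) : Set ((Fin k → Bool) → (Fin n → Bool) → ℝ) :=
  {P | (∀ y x, 0 ≤ P y x) ∧ ∀ y, ∑ x, P y x = 1}

/-- Composition of Markov kernels: `(R ∘ Q)(x|y) = ∑_z Q(z|y) R(x|z)`. -/
noncomputable def kcomp {k m n : ℕ} (R : (Fin m → Bool) → (Fin n → Bool) → ℝ)
    (Q : (Fin k → Bool) → (Fin m → Bool) → ℝ) : (Fin k → Bool) → (Fin n → Bool) → ℝ :=
  fun y x => ∑ z, Q y z * R z x

/-- `Δ_n`: probability distributions on `{0,1}^n`. -/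
def simplex (n : ℕ) : Set ((Fin n → Bool) → ℝ) :=
  {p | (∀ x, 0 ≤ p x) ∧ ∑ x, p x = 1}

/-- `Δ_n^+`: strictly positive probability distributions on `{0,1}^n`. -/
def simplexPos (n : ℕ) : Set ((Fin n → Bool) → ℝ) :=
  {p | (∀ x, 0 < p x) ∧ ∑ x, p x = 1}

/-- Mixture `p^⊤ R` of the rows of a kernel `R` with weights `p`. -/
noncomputable def mix {m n : ℕ} (p : (Fin m → Bool) → ℝ)
    (R : (Fin m → Bool) → (Fin n → Bool) → ℝ) : (Fin n → Bool) → ℝ :=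
  fun x => ∑ z, p z * R z x

/-- `E_m`: strictly positive product distributions on `{0,1}^m`, where the `j`-th bit
is `0` with probability `q j ∈ (0,1)`. -/
def Eset (m : ℕ) : Set ((Fin m → Bool) → ℝ) :=
  {p | ∃ q : Fin m → ℝ, (∀ j, q j ∈ Set.Ioo (0:ℝ) 1) ∧
    ∀ z, p z = ∏ j, (if z j then 1 - q j else q j)}

/-- Integer value of a binary vector (bit `i` has weight `2^i`). -/
def intval {k : ℕ} (y : Fin k → Bool) : ℕ := ∑ i, if y i then 2 ^ (i : ℕ) else 0

/-- `l(z)`: position (1-based) of the largest nonzero entry of `z`, and `0` if `z = 0`. -/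
def lidx {N : ℕ} (z : Fin N → Bool) : ℕ :=
  (Finset.univ.filter (fun j => z j = true)).sup (fun j => (j : ℕ) + 1)

/-- `bin_n(l)`: the `n`-bit binary representation of `l`. -/
def binVec (n l : ℕ) : Fin n → Bool := fun i => Nat.testBit l (i : ℕ)

/-- Point measure at `x ∈ {0,1}^n`. -/
noncomputable def deltaAt {n : ℕ} (x : Fin n → Bool) : (Fin n → Bool) → ℝ :=
  fun x' => if x' = x then 1 else 0

/-!
An affine function `f - n h` with `h ≥ 0` tends to `f` on the zero set of `h` and to `-∞` off it, so
in the limit a single sigmoid unit computes `σ ∘ f` on that zero set and outputs `0` elsewhere. The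
number of coordinates other than `l` in which `y` differs from `y'` is such an `h`; it vanishes
exactly on `{y', y''}`, where `f` can be chosen to take any two values. This gives all pairs of
strictly positive `q', q''`, and the remaining ones follow by density.
-/

open Filter Topology

lemma sigmoid_eq_real_sigmoid : sigmoid = Real.sigmoid := by
  funext a
  rw [sigmoid, Real.sigmoid_def, one_div]

lemma tendsto_sigmoid_sub_natCast_mul (a : ℝ) {b : ℝ} (hb : 0 ≤ b) :
    Tendsto (fun n : ℕ => sigmoid (a - n * b)) atTop (𝓝 (if b = 0 then sigmoid a else 0)) := by
  split_ifs with hb0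
  · simp [hb0]
  · have hlim : Tendsto (fun n : ℕ => a - n * b) atTop atBot :=
      tendsto_atBot_add_const_left _ a <| tendsto_neg_atTop_atBot.comp <|
        tendsto_natCast_atTop_atTop.atTop_mul_const (hb.lt_of_ne' hb0)
    rw [sigmoid_eq_real_sigmoid]
    exact Real.tendsto_sigmoid_atBot.comp hlim

/-- The Bernoulli distribution on `{0,1}^1` giving mass `s` to the bit `1`, for any real `s`; it is
a probability distribution only when `s ∈ [0, 1]`. -/
def bernoulliDist (s : ℝ) : (Fin 1 → Bool) → ℝ := fun z => if z 0 then s else 1 - s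

lemma continuous_bernoulliDist : Continuous bernoulliDist := by
  refine continuous_pi fun z => ?_
  unfold bernoulliDist
  split_ifs <;> fun_prop

lemma bernoulliDist_zero : bernoulliDist 0 = deltaAt fun _ => false := by
  funext z
  cases hz : z 0 <;> simp [bernoulliDist, deltaAt, funext_iff, hz]

lemma exists_bernoulliDist_eq_of_mem_simplex {q : (Fin 1 → Bool) → ℝ} (hq : q ∈ simplex 1) :
    ∃ s ∈ Set.Icc (0 : ℝ) 1, bernoulliDist s = q := by
  obtain ⟨hnonneg, hsum⟩ := hq
  have hsum_two : q (fun _ => true) + q (fun _ => false) = 1 := by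
    rw [← hsum, ← (Equiv.funUnique (Fin 1) Bool).symm.sum_comp, Fintype.sum_bool]
    rfl
  refine ⟨q fun _ => true, ⟨hnonneg _, by linarith [hnonneg fun _ => false]⟩, ?_⟩
  funext z
  obtain ⟨b, rfl⟩ := (Equiv.funUnique (Fin 1) Bool).symm.surjective z
  cases b
  · exact sub_eq_of_eq_add' hsum_two.symm
  · rfl

lemma simplex_one_subset_closure_range_bernoulliDist_sigmoid :
    simplex 1 ⊆ closure (Set.range fun a => bernoulliDist (sigmoid a)) := by
  intro q hq
  obtain ⟨s, hs, rfl⟩ := exists_bernoulliDist_eq_of_mem_simplex hq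
  have hs_closure : s ∈ closure (Set.range sigmoid) := by
    rwa [sigmoid_eq_real_sigmoid, Real.range_sigmoid, closure_Ioo zero_ne_one]
  exact map_mem_closure continuous_bernoulliDist hs_closure
    (Set.forall_mem_range.2 Set.mem_range_self)

section Cube

variable {k : ℕ}

/-- The space of real functions on `{0,1}^k` that are affine in the entries of the input: the
possible pre-activations of a sigmoid unit. -/
def cubeAffine (k : ℕ) : Submodule ℝ ((Fin k → Bool) → ℝ) where
  carrier := {f | ∃ (v : Fin k → ℝ) (c : ℝ), ∀ y, f y = (∑ i, v i * bval (y i)) + c}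
  zero_mem' := ⟨0, 0, by simp⟩
  add_mem' := by
    rintro f g ⟨v, c, hf⟩ ⟨w, d, hg⟩
    refine ⟨v + w, c + d, fun y => ?_⟩
    simp only [Pi.add_apply, hf, hg, add_mul, sum_add_distrib]
    ring
  smul_mem' := by
    rintro a f ⟨v, c, hf⟩
    refine ⟨a • v, a * c, fun y => ?_⟩
    simp only [Pi.smul_apply, smul_eq_mul, hf, mul_add, mul_sum, mul_assoc]

lemma const_mem_cubeAffine (c : ℝ) : (fun _ => c) ∈ cubeAffine k :=
  ⟨0, c, by simp⟩

lemma bval_apply_mem_cubeAffine (i : Fin k) : (fun y => bval (y i)) ∈ cubeAffine k :=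
  ⟨Pi.single i 1, 0, by simp [Pi.single_apply]⟩

lemma ite_apply_eq_mem_cubeAffine (i : Fin k) (b : Bool) :
    (fun y => if y i = b then (0 : ℝ) else 1) ∈ cubeAffine k := by
  cases b
  · convert bval_apply_mem_cubeAffine i using 2 with y
    cases y i <;> simp [bval]
  · convert sub_mem (const_mem_cubeAffine 1) (bval_apply_mem_cubeAffine i) using 1
    funext y
    cases h : y i <;> simp [bval, h]

/-- The number of coordinates in `s` at which `y` differs from `x`, as a real number: an affine
function of `y` whose zero set is the face of the cube through `x` with the coordinates in `s`
fixed. -/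
def mismatchCount (s : Finset (Fin k)) (x y : Fin k → Bool) : ℝ :=
  ∑ i ∈ s, if y i = x i then 0 else 1

lemma mismatchCount_mem_cubeAffine (s : Finset (Fin k)) (x : Fin k → Bool) :
    mismatchCount s x ∈ cubeAffine k := by
  convert sum_mem fun i (_ : i ∈ s) => ite_apply_eq_mem_cubeAffine i (x i) using 1
  funext y
  simp only [mismatchCount, Finset.sum_apply]

lemma mismatchCount_nonneg (s : Finset (Fin k)) (x y : Fin k → Bool) :
    0 ≤ mismatchCount s x y :=
  sum_nonneg fun _ _ => by split_ifs <;> norm_num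

lemma mismatchCount_eq_zero_iff {s : Finset (Fin k)} {x y : Fin k → Bool} :
    mismatchCount s x y = 0 ↔ ∀ i ∈ s, y i = x i := by
  rw [mismatchCount, sum_eq_zero_iff_of_nonneg fun _ _ => by split_ifs <;> norm_num]
  simp

lemma bernoulliDist_sigmoid_comp_mem_Fset {f : (Fin k → Bool) → ℝ} (hf : f ∈ cubeAffine k) :
    (fun y => bernoulliDist (sigmoid (f y))) ∈ Fset k 1 := by
  obtain ⟨v, c, hvc⟩ := hf
  exact ⟨fun _ => v, fun _ => c, fun y z => by simp [bernoulliDist, hvc]⟩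

lemma bernoulliDist_sigmoid_on_zeros_mem_closure_Fset {f h : (Fin k → Bool) → ℝ}
    (hf : f ∈ cubeAffine k) (hh : h ∈ cubeAffine k) (hnonneg : ∀ y, 0 ≤ h y) :
    (fun y => bernoulliDist (if h y = 0 then sigmoid (f y) else 0)) ∈ closure (Fset k 1) := by
  have hlim : Tendsto (fun (n : ℕ) y => bernoulliDist (sigmoid (f y - n * h y))) atTop
      (𝓝 fun y => bernoulliDist (if h y = 0 then sigmoid (f y) else 0)) :=
    tendsto_pi_nhds.2 fun y => (continuous_bernoulliDist.tendsto _).comp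
      (tendsto_sigmoid_sub_natCast_mul (f y) (hnonneg y))
  refine mem_closure_of_tendsto hlim (.of_forall fun n => ?_)
  exact bernoulliDist_sigmoid_comp_mem_Fset (sub_mem hf ((cubeAffine k).smul_mem (n : ℝ) hh))

/-- The kernel on `{0,1}^k` with rows `p` at `x` and `q` at `y`, and the point measure at `0` as
every other row. If `x = y`, the row is `p`. -/
noncomputable def pairKernel (x y : Fin k → Bool) (p q : (Fin 1 → Bool) → ℝ) :
    (Fin k → Bool) → (Fin 1 → Bool) → ℝ :=
  fun z => if z = x then p else if z = y then q else deltaAt fun _ => false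

lemma continuous_pairKernel (x y : Fin k → Bool) :
    Continuous (Function.uncurry (pairKernel x y)) := by
  refine continuous_pi fun z => ?_
  simp only [Function.uncurry_def, pairKernel]
  split_ifs <;> fun_prop

variable {x y : Fin k → Bool} {l : Fin k}

lemma eq_or_eq_iff_forall_mem_erase (hne : x l ≠ y l) (heq : ∀ i, i ≠ l → x i = y i)
    (z : Fin k → Bool) : z = x ∨ z = y ↔ ∀ i ∈ univ.erase l, z i = x i := by
  constructor
  · rintro (rfl | rfl) i hi
    · rfl
    · exact (heq i (ne_of_mem_erase hi)).symm
  · intro hz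
    have hz_off (i : Fin k) (hi : i ≠ l) : z i = x i := hz i (mem_erase.2 ⟨hi, mem_univ i⟩)
    have hz_at : z l = x l ∨ z l = y l := by
      revert hne
      cases z l <;> cases x l <;> cases y l <;> decide
    refine hz_at.imp (fun hl => funext fun i => ?_) fun hl => funext fun i => ?_
    · obtain rfl | hi := eq_or_ne i l
      exacts [hl, hz_off i hi]
    · obtain rfl | hi := eq_or_ne i l
      exacts [hl, (hz_off i hi).trans (heq i hi)]

lemma pairKernel_bernoulliDist_sigmoid_mem_closure_Fset (hne : x l ≠ y l)
    (heq : ∀ i, i ≠ l → x i = y i) (a b : ℝ) :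
    pairKernel x y (bernoulliDist (sigmoid a)) (bernoulliDist (sigmoid b)) ∈
      closure (Fset k 1) := by
  let f : (Fin k → Bool) → ℝ := (fun _ => a) + (b - a) • mismatchCount {l} x
  have hf : f ∈ cubeAffine k := add_mem (const_mem_cubeAffine a)
    (Submodule.smul_mem _ _ (mismatchCount_mem_cubeAffine {l} x))
  have hfx : f x = a := by simp [f, mismatchCount]
  have hfy : f y = b := by simp [f, mismatchCount, hne.symm]
  convert bernoulliDist_sigmoid_on_zeros_mem_closure_Fset hf
    (mismatchCount_mem_cubeAffine (univ.erase l) x) (mismatchCount_nonneg _ x) using 1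
  funext z
  simp only [pairKernel, mismatchCount_eq_zero_iff, ← eq_or_eq_iff_forall_mem_erase hne heq]
  by_cases hzx : z = x
  · simp [hzx, hfx]
  by_cases hzy : z = y
  · simp [hzy, hfy, hzy ▸ hzx]
  · simp [hzx, hzy, bernoulliDist_zero]

end Cube

/-- Lemma 1: if `y'` and `y''` differ in exactly one entry and `q', q''` are any two
distributions on `{0,1}`, then the kernel sending `y' ↦ q'`, `y'' ↦ q''` and every other
input to the point measure at `0` lies in the closure of `F_{k,1}`. -/
theorem edge_pair_kernel_mem_closure
    (k : ℕ) (hk : 1 ≤ k) (y' y'' : Fin k → Bool) (l : Fin k)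
    (hne : y' l ≠ y'' l) (heq : ∀ i, i ≠ l → y' i = y'' i)
    (q' q'' : (Fin 1 → Bool) → ℝ) (hq' : q' ∈ simplex 1) (hq'' : q'' ∈ simplex 1) :
    (fun y => if y = y' then q' else if y = y'' then q''
              else deltaAt (fun _ => false)) ∈ closure (Fset k 1) := by
  change pairKernel y' y'' q' q'' ∈ _
  rw [← closure_closure]
  refine map_mem_closure₂ (continuous_pairKernel y' y'')
    (simplex_one_subset_closure_range_bernoulliDist_sigmoid hq')
    (simplex_one_subset_closure_range_bernoulliDist_sigmoid hq'') ?_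
  rintro _ ⟨a, rfl⟩ _ ⟨b, rfl⟩
  exact pairKernel_bernoulliDist_sigmoid_mem_closure_Fset hne heq a b
end

section
/- Let n ≥ 1 and N = 2^n − 1. The deterministic Markov kernel Q ∈ Δ_{N,n} defined by Q(·|z) = δ_{bin_n(l(z))} for all z ∈ {0,1}^N (the row indexed by z is the point measure at the n-bit binary representation of the index of the largest nonzero entry of z) lies in the closure of F_{N,n}. -/
open Finset

/-!
A stochastic sigmoid unit whose weights and bias are multiplied by `t → ∞` becomes a linear
threshold unit, so the closure of `F_{N,n}` contains every deterministic kernel each of whose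
output bits is a linear threshold function of the input.

Every function `f` of the largest nonzero index `l(z)` with values in `{±1}` is of this kind: it is
the sign of `f(0) + ∑ᵢ f(i) 2^i zᵢ`, because the term of index `l(z)` exceeds in absolute value the
sum of all the lower ones.
-/

open Filter Topology

section Lidx

variable {N : ℕ}

theorem lidx_le (z : Fin N → Bool) : lidx z ≤ N :=
  Finset.sup_le fun j _ => j.isLt

theorem lidx_eq_sup_lidx_init (z : Fin (N + 1) → Bool) :
    lidx z = (if z (Fin.last N) then N + 1 else 0) ⊔ lidx (Fin.init z) := by
  have lidx_eq_sup_ite {k : ℕ} (y : Fin k → Bool) :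
      lidx y = univ.sup fun j => if y j then (j : ℕ) + 1 else 0 := by
    simp [lidx, Finset.sup_ite]
  simp only [lidx_eq_sup_ite, Fin.univ_castSuccEmb, Finset.sup_cons, Finset.sup_map]
  rfl

theorem lidx_of_last_eq_true {z : Fin (N + 1) → Bool} (hz : z (Fin.last N) = true) :
    lidx z = N + 1 := by
  rw [lidx_eq_sup_lidx_init, if_pos hz, sup_eq_left]
  exact (lidx_le _).trans N.le_succ

theorem lidx_of_last_eq_false {z : Fin (N + 1) → Bool} (hz : z (Fin.last N) = false) :
    lidx z = lidx (Fin.init z) := by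
  simp [lidx_eq_sup_lidx_init, hz]

end Lidx

section LidxScore

/-- The affine function `s(0) + ∑ᵢ s(i) 2^i zᵢ` of `z ∈ {0,1}^N`, with `i` running over `1, …, N`.
For `s` with values in `{±1}` its sign is `s(l(z))`. The entry `zᵢ` is `z (i - 1)`, since `Fin N` is
zero-based. -/
noncomputable def lidxScore {N : ℕ} (s : ℕ → ℝ) (z : Fin N → Bool) : ℝ :=
  (∑ i : Fin N, s (i + 1) * 2 ^ ((i : ℕ) + 1) * bval (z i)) + s 0

variable {N : ℕ} (s : ℕ → ℝ)

theorem lidxScore_succ (z : Fin (N + 1) → Bool) :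
    lidxScore s z =
      lidxScore s (Fin.init z) + s (N + 1) * 2 ^ (N + 1) * bval (z (Fin.last N)) := by
  simp only [lidxScore, Fin.sum_univ_castSucc, Fin.val_castSucc, Fin.val_last, Fin.init]
  ring

variable {s}

theorem abs_lidxScore_lt_two_pow (hs : ∀ l, |s l| ≤ 1) (z : Fin N → Bool) :
    |lidxScore s z| < 2 ^ (N + 1) := by
  induction N with
  | zero => simpa [lidxScore] using (hs 0).trans_lt one_lt_two
  | succ N ih =>
    have last_term_le : |s (N + 1) * 2 ^ (N + 1) * bval (z (Fin.last N))| ≤ 2 ^ (N + 1) := by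
      have bval_le : |bval (z (Fin.last N))| ≤ 1 := by cases z (Fin.last N) <;> simp [bval]
      calc |s (N + 1) * 2 ^ (N + 1) * bval (z (Fin.last N))|
          = |s (N + 1)| * 2 ^ (N + 1) * |bval (z (Fin.last N))| := by simp [abs_mul]
        _ ≤ 1 * 2 ^ (N + 1) * 1 := by gcongr; exact hs _
        _ = 2 ^ (N + 1) := by ring
    calc |lidxScore s z|
        ≤ |lidxScore s (Fin.init z)| + |s (N + 1) * 2 ^ (N + 1) * bval (z (Fin.last N))| := by
          rw [lidxScore_succ]; exact abs_add_le _ _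
      _ < 2 ^ (N + 1) + 2 ^ (N + 1) := add_lt_add_of_lt_of_le (ih _) last_term_le
      _ = 2 ^ (N + 1 + 1) := by ring

theorem mul_lidxScore_pos (hs : ∀ l, |s l| = 1) (z : Fin N → Bool) :
    0 < s (lidx z) * lidxScore s z := by
  have mul_self_eq_one (l : ℕ) : s l * s l = 1 := by rw [← abs_mul_abs_self, hs, one_mul]
  induction N with
  | zero => simp [lidx, lidxScore, mul_self_eq_one]
  | succ N ih =>
    cases hz : z (Fin.last N) with
    | false => simpa [lidx_of_last_eq_false hz, lidxScore_succ, hz, bval] using ih (Fin.init z)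
    | true =>
      have lower_terms_lt : |s (N + 1) * lidxScore s (Fin.init z)| < 2 ^ (N + 1) := by
        rw [abs_mul, hs, one_mul]
        exact abs_lidxScore_lt_two_pow (fun l => (hs l).le) _
      calc 0 < s (N + 1) * lidxScore s (Fin.init z) + 2 ^ (N + 1) :=
            neg_lt_iff_pos_add.mp (neg_lt_of_abs_lt lower_terms_lt)
        _ = s (N + 1) * lidxScore s (Fin.init z) + s (N + 1) * s (N + 1) * 2 ^ (N + 1) := by
            rw [mul_self_eq_one, one_mul]
        _ = s (lidx z) * lidxScore s z := by
            simp only [lidx_of_last_eq_true hz, lidxScore_succ, hz, bval, if_true]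
            ring

end LidxScore

section BitSign

/-- The sign `±1` encoding a bit: `1` for `true` and `-1` for `false`. -/
def bitSign (b : Bool) : ℝ := if b then 1 else -1

theorem abs_bitSign (b : Bool) : |bitSign b| = 1 := by
  cases b <;> simp [bitSign]

theorem bitSign_eq_neg_of_ne {a b : Bool} (h : a ≠ b) : bitSign a = -bitSign b := by
  cases a <;> cases b <;> simp_all [bitSign]

theorem sigmoid_bitSign_mul (b : Bool) (a : ℝ) :
    Real.sigmoid (bitSign b * a) = if b then sigmoid a else 1 - sigmoid a := by
  have sigmoid_eq : sigmoid a = Real.sigmoid a := one_div _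
  cases b <;> simp [bitSign, sigmoid_eq, Real.sigmoid_neg]

theorem tendsto_sigmoid_bitSign_mul_atTop {a : ℝ} {b : Bool} (h : 0 < bitSign b * a) (x : Bool) :
    Tendsto (fun t : ℝ => Real.sigmoid (bitSign x * (t * a))) atTop
      (𝓝 (if x = b then 1 else 0)) := by
  simp only [mul_left_comm (bitSign x)]
  split_ifs with hx
  · subst hx
    exact Real.tendsto_sigmoid_atTop.comp (tendsto_id.atTop_mul_const h)
  · have h_neg : bitSign x * a < 0 := by
      rw [bitSign_eq_neg_of_ne hx, neg_mul]
      exact neg_neg_of_pos h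
    exact Real.tendsto_sigmoid_atBot.comp (tendsto_id.atTop_mul_const_of_neg h_neg)

end BitSign

section Layer

variable {k m : ℕ} (V : Fin m → Fin k → ℝ) (c : Fin m → ℝ)

/-- The argument `w_j^⊤ y + b_j` of the sigmoid of the `j`-th unit of a layer with weights `V` and
biases `c`, on the input `y`. -/
noncomputable def preactivation (y : Fin k → Bool) (j : Fin m) : ℝ :=
  (∑ i, V j i * bval (y i)) + c j

/-- The element of `F_{k,m}` with weights `V` and biases `c`. Since `1 - σ(a) = σ(-a)`, the two
cases of each factor are merged into `σ(±a)`. -/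
noncomputable def layerKernel (y : Fin k → Bool) (x : Fin m → Bool) : ℝ :=
  ∏ j, Real.sigmoid (bitSign (x j) * preactivation V c y j)

theorem layerKernel_mem_Fset : layerKernel V c ∈ Fset k m :=
  ⟨V, c, fun _ _ => prod_congr rfl fun _ _ => sigmoid_bitSign_mul _ _⟩

theorem preactivation_smul (t : ℝ) (y : Fin k → Bool) (j : Fin m) :
    preactivation (t • V) (t • c) y j = t * preactivation V c y j := by
  simp only [preactivation, Pi.smul_apply, smul_eq_mul, mul_add, mul_sum, mul_assoc]

theorem deltaAt_eq_prod_ite (x x' : Fin m → Bool) :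
    deltaAt x x' = ∏ j, if x' j = x j then (1 : ℝ) else 0 := by
  simp [deltaAt, prod_ite_zero, funext_iff]

variable {V c}

theorem tendsto_layerKernel_smul_atTop {g : (Fin k → Bool) → Fin m → Bool}
    (h : ∀ y j, 0 < bitSign (g y j) * preactivation V c y j) :
    Tendsto (fun t : ℝ => layerKernel (t • V) (t • c)) atTop (𝓝 fun y => deltaAt (g y)) := by
  refine tendsto_pi_nhds.mpr fun y => tendsto_pi_nhds.mpr fun x => ?_
  simp only [layerKernel, preactivation_smul, deltaAt_eq_prod_ite]
  exact tendsto_finsetProd _ fun j _ => tendsto_sigmoid_bitSign_mul_atTop (h y j) (x j)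

theorem deltaAt_mem_closure_Fset_of_linear_threshold {g : (Fin k → Bool) → Fin m → Bool}
    (h : ∀ y j, 0 < bitSign (g y j) * preactivation V c y j) :
    (fun y => deltaAt (g y)) ∈ closure (Fset k m) :=
  mem_closure_of_tendsto (tendsto_layerKernel_smul_atTop h)
    (Eventually.of_forall fun _ => layerKernel_mem_Fset _ _)

end Layer

theorem largest_entry_indicator_kernel_mem_closure_general (N n : ℕ) (code : ℕ → Fin n → Bool) :
    (fun z : Fin N → Bool => deltaAt (code (lidx z))) ∈ closure (Fset N n) := by
  let s (j : Fin n) (l : ℕ) : ℝ := bitSign (code l j)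
  have score_pos (z : Fin N → Bool) (j : Fin n) :
      0 < bitSign (code (lidx z) j) * lidxScore (s j) z :=
    mul_lidxScore_pos (s := s j) (fun _ => abs_bitSign _) z
  exact deltaAt_mem_closure_Fset_of_linear_threshold
    (V := fun j i => s j (i + 1) * 2 ^ ((i : ℕ) + 1)) (c := fun j => s j 0) score_pos

/-- Lemma 2: for `N = 2^n - 1`, the deterministic kernel `Q(·|z) = δ_{bin_n(l(z))}`
lies in the closure of `F_{N,n}`. -/
theorem largest_entry_indicator_kernel_mem_closure (n : ℕ) (hn : 1 ≤ n) :
    (fun (z : Fin (2 ^ n - 1) → Bool) => deltaAt (binVec n (lidx z)))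
      ∈ closure (Fset (2 ^ n - 1) n) :=
  largest_entry_indicator_kernel_mem_closure_general _ n (binVec n)
end
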